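/- Let C₁ and C₂ be real symmetric N×N matrices, and let λ₁(C_i), …, λ_N(C_i) denote the eigenvalues of C_i ordered with non-decreasing absolute value. If C₂ has at most d non-zero eigenvalues and λ₁(C₁) ≠ 0, then |det(C₁ + C₂)| ≤ |det(C₁)| · (1 + |λ_N(C₂)| / |λ₁(C₁)|)^d. -/

import Mathlib

open Matrix in
/-- Hadamard's inequality for the columns of a real square matrix. -/
lemma hadamard_cols {N : ℕ} (w : Fin N → EuclideanSpace ℝ (Fin N)) :
    |(Matrix.of fun i j => w j i).det| ≤ ∏ j, ‖w j‖ := by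
  haveI : Fact (Module.finrank ℝ (EuclideanSpace ℝ (Fin N)) = N) := ⟨by simp⟩
  let b := EuclideanSpace.basisFun (Fin N) ℝ
  have h := (b.toBasis.orientation).abs_volumeForm_apply_le w
  rw [(b.toBasis.orientation).volumeForm_robust' b] at h
  have h2 : b.toBasis.det w = (Matrix.of fun i j => w j i).det := by
    rw [Module.Basis.det_apply]
    rfl
  rwa [h2] at h

open Matrix in
/-- A symmetric matrix expands every vector by at least a lower bound of its eigenvalues. -/
lemma norm_le_of_eigen {N : ℕ} {C : Matrix (Fin N) (Fin N) ℝ} (h : C.IsHermitian)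
    {m : ℝ} (hm : 0 ≤ m) (hl : ∀ j, m ≤ |h.eigenvalues j|) (x : EuclideanSpace ℝ (Fin N)) :
    m * ‖x‖ ≤ ‖WithLp.toLp 2 (C *ᵥ x.ofLp)‖ := by
  have key : ∀ j, inner ℝ (h.eigenvectorBasis j) (WithLp.toLp 2 (C *ᵥ x.ofLp)) =
      h.eigenvalues j * inner ℝ (h.eigenvectorBasis j) x := by
    intro j
    have e := h.mulVec_eigenvectorBasis j
    have ht : Cᵀ = C := by simpa [Matrix.IsHermitian] using h
    simp only [EuclideanSpace.inner_eq_star_dotProduct, star_trivial]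
    rw [dotProduct_comm, dotProduct_mulVec, ← mulVec_transpose, ht, e, smul_dotProduct,
      smul_eq_mul, dotProduct_comm]
  refine (sq_le_sq₀ (by positivity) (norm_nonneg _)).1 ?_
  rw [mul_pow, ← h.eigenvectorBasis.sum_sq_norm_inner_right x,
    ← h.eigenvectorBasis.sum_sq_norm_inner_right (WithLp.toLp 2 (C *ᵥ x.ofLp)), Finset.mul_sum]
  refine Finset.sum_le_sum fun j _ => ?_
  rw [key, norm_mul, mul_pow, Real.norm_eq_abs (h.eigenvalues j)]
  have := hl j
  gcongr


/-- Let `C₁, C₂` be real symmetric `N×N` matrices. If `C₂` has at most `d` non-zero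
eigenvalues and the smallest absolute value of an eigenvalue of `C₁` is non-zero, then
`|det(C₁ + C₂)| ≤ |det C₁| · (1 + λ_max|C₂| / λ_min|C₁|)^d`, where `λ_min|C₁|` is the
minimal and `λ_max|C₂|` the maximal absolute value of an eigenvalue. -/
theorem stmt_3 (N d : ℕ) (hN : 0 < N)
    (C₁ C₂ : Matrix (Fin N) (Fin N) ℝ)
    (h₁ : C₁.IsHermitian) (h₂ : C₂.IsHermitian)
    (hrank : ({j | h₂.eigenvalues j ≠ 0} : Finset (Fin N)).card ≤ d)
    (hmin : (⨅ j, |h₁.eigenvalues j|) ≠ 0) :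
    |(C₁ + C₂).det| ≤
      |C₁.det| * (1 + (⨆ j, |h₂.eigenvalues j|) / (⨅ j, |h₁.eigenvalues j|)) ^ d := by

  classical
  haveI : Nonempty (Fin N) := ⟨⟨0, hN⟩⟩
  set m := ⨅ j, |h₁.eigenvalues j| with hm
  set M := ⨆ j, |h₂.eigenvalues j| with hM
  have hl : ∀ j, m ≤ |h₁.eigenvalues j| := fun j => ciInf_le (Set.finite_range _).bddBelow j
  have hu : ∀ j, |h₂.eigenvalues j| ≤ M := fun j =>
    le_ciSup (f := fun j => |h₂.eigenvalues j|) (Set.finite_range _).bddAbove j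
  have hm0 : 0 < m := lt_of_le_of_ne (le_ciInf fun j => abs_nonneg _) (Ne.symm hmin)
  have hM0 : 0 ≤ M := (abs_nonneg _).trans (hu ⟨0, hN⟩)
  have hdet : C₁.det ≠ 0 := by
    rw [h₁.det_eq_prod_eigenvalues]
    refine Finset.prod_ne_zero_iff.2 fun j _ => ?_
    have := hm0.trans_le (hl j)
    simpa using abs_pos.1 this
  have hunit : IsUnit C₁.det := hdet.isUnit
  let u := h₂.eigenvectorBasis
  let y : Fin N → EuclideanSpace ℝ (Fin N) := fun j =>
    WithLp.toLp 2 (C₁⁻¹.mulVec (u j).ofLp)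
  have hy : ∀ j, C₁.mulVec (y j).ofLp = (u j).ofLp := by
    intro j
    simp [y, Matrix.mulVec_mulVec, Matrix.mul_nonsing_inv _ hunit]
  have hyn : ∀ j, ‖y j‖ ≤ 1 / m := by
    intro j
    have h := norm_le_of_eigen h₁ hm0.le hl (y j)
    rw [hy] at h
    have h1 : ‖u j‖ = 1 := u.orthonormal.1 j
    rw [le_div_iff₀ hm0, mul_comm]
    exact h.trans h1.le
  let w : Fin N → EuclideanSpace ℝ (Fin N) := fun j => u j + h₂.eigenvalues j • y j
  let U : Matrix (Fin N) (Fin N) ℝ := h₂.eigenvectorUnitary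
  let W : Matrix (Fin N) (Fin N) ℝ := Matrix.of fun i j => w j i
  have hU : |U.det| = 1 := by
    have h := Matrix.UnitaryGroup.star_mul_self h₂.eigenvectorUnitary
    have h' := congrArg Matrix.det h
    rw [Matrix.det_mul, Matrix.star_eq_conjTranspose, Matrix.det_conjTranspose] at h'
    simp only [star_trivial, Matrix.det_one] at h'
    rcases mul_self_eq_one_iff.1 h' with h | h <;> simp [U, h]
  have hprod : (C₁ + C₂) * U = C₁ * W := by
    have hcol : ∀ j, (C₁ + C₂).mulVec (u j).ofLp = C₁.mulVec (w j).ofLp := by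
      intro j
      simp only [w, WithLp.ofLp_add, WithLp.ofLp_smul, Matrix.add_mulVec, Matrix.mulVec_add,
        Matrix.mulVec_smul, hy]
      rw [h₂.mulVec_eigenvectorBasis j]
    ext i j
    exact congrFun (hcol j) i
  have hd : |(C₁ + C₂).det| = |C₁.det| * |W.det| := by
    have h := congrArg (fun A => |Matrix.det A|) hprod
    simpa only [Matrix.det_mul, abs_mul, hU, mul_one] using h
  rw [hd]
  refine mul_le_mul_of_nonneg_left ?_ (abs_nonneg _)
  refine (hadamard_cols w).trans ?_
  have hb : 1 ≤ 1 + M / m := by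
    have : 0 ≤ M / m := by positivity
    linarith
  have hw : ∀ j, ‖w j‖ ≤ if h₂.eigenvalues j ≠ 0 then 1 + M / m else 1 := by
    intro j
    have h1 : ‖u j‖ = 1 := u.orthonormal.1 j
    split_ifs with h0
    · refine (norm_add_le _ _).trans ?_
      rw [h1, norm_smul, Real.norm_eq_abs, div_eq_mul_one_div]
      gcongr
      · exact hu j
      · exact hyn j
    · have h0' : h₂.eigenvalues j = 0 := by simpa using h0
      simp [w, h0', h1]
  refine (Finset.prod_le_prod (fun j _ => norm_nonneg _) fun j _ => hw j).trans ?_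
  rw [Finset.prod_ite, Finset.prod_const, Finset.prod_const_one, mul_one]
  exact pow_le_pow_right₀ hb (by convert hrank)
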